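/- arXiv:1009.2541 — 3 statements merged into one kernel-verified Lean document; each statement's English description precedes it below -/
import Mathlib

section
/- For every n ≥ 1, the map ψ_n : M_n(ℂ) → B(ℓ²(ℕ)) defined by ψ_n(Y) = V_n Y V_n* + y_{1,1} Q_n is unital and completely positive, and its range is contained in S₀ (i.e., ψ_n(M_n(ℂ)) ⊆ S₀). -/
noncomputable section

open scoped ComplexOrder InnerProductSpace

/-- The Hilbert space ℓ²(ℕ) of square-summable complex sequences. -/
abbrev Hs : Type := lp (fun _ : ℕ => ℂ) 2

/-- The standard orthonormal basis vectors of ℓ²(ℕ) (indexed from 0). -/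
def e (i : ℕ) : Hs := lp.single 2 i 1

/-- The matrix unit `E i j : x ↦ ⟨x, e j⟩ e i`. -/
def E (i j : ℕ) : Hs →L[ℂ] Hs := (innerSL ℂ (e j)).smulRight (e i)

/-- `K₀`: the norm-closed linear span of the matrix units `E i j`, `(i,j) ≠ (0,0)`. -/
def K0 : Submodule ℂ (Hs →L[ℂ] Hs) :=
  (Submodule.span ℂ {T | ∃ i j : ℕ, (i, j) ≠ (0, 0) ∧ T = E i j}).topologicalClosure

/-- The operator system `S₀` spanned by `K₀` and the identity operator. -/
def S0 : Submodule ℂ (Hs →L[ℂ] Hs) := Submodule.span ℂ {(1 : Hs →L[ℂ] Hs)} ⊔ K0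

lemma one_mem_S0 : (1 : Hs →L[ℂ] Hs) ∈ S0 :=
  Submodule.mem_sup_left (Submodule.mem_span_singleton_self _)

/-- The matrix entry `X_{ij} = ⟨X e_j, e_i⟩` of a bounded operator on ℓ²(ℕ). -/
def entry (X : Hs →L[ℂ] Hs) (i j : ℕ) : ℂ := ⟪e i, X (e j)⟫_ℂ

/-- `φ_{n+1}(X) = V_{n+1}* X V_{n+1}`, the upper-left (n+1)×(n+1) corner of `X`. -/
def phi (n : ℕ) (X : Hs →L[ℂ] Hs) : Matrix (Fin (n+1)) (Fin (n+1)) ℂ :=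
  fun i j => entry X i j

/-- `Q_{n+1}`: the projection onto the orthocomplement of the span of `e 0, …, e n`. -/
def Qop (n : ℕ) : Hs →L[ℂ] Hs := 1 - ∑ i : Fin (n+1), E i i

/-- `ψ_{n+1}(Y) = V_{n+1} Y V_{n+1}* + y₀₀ Q_{n+1}`. -/
def psi (n : ℕ) (Y : Matrix (Fin (n+1)) (Fin (n+1)) ℂ) : Hs →L[ℂ] Hs :=
  (∑ i : Fin (n+1), ∑ j : Fin (n+1), Y i j • E i j) + Y 0 0 • Qop n

/-- Positivity in the C*-algebra of m×m matrices over a star ring: `M = N* N`. -/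
def MatPos {A : Type*} [Ring A] [StarRing A] {m : ℕ}
    (M : Matrix (Fin m) (Fin m) A) : Prop :=
  ∃ N : Matrix (Fin m) (Fin m) A, M = N.conjTranspose * N

/-- Complete positivity of a map between star rings: every matrix amplification
preserves positivity. -/
def IsCPfun {A B : Type*} [Ring A] [StarRing A] [Ring B] [StarRing B]
    (θ : A → B) : Prop :=
  ∀ (m : ℕ) (M : Matrix (Fin m) (Fin m) A), MatPos M → MatPos (M.map θ)

lemma cstar_aux {A : Type*} [CStarAlgebra A] [PartialOrder A] [StarOrderedRing A] (a b : A) :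
    ∃ c, star a * a + star b * b = star c * c :=
  CStarAlgebra.nonneg_iff_eq_star_mul_self.mp
    (add_nonneg (star_mul_self_nonneg _) (star_mul_self_nonneg _))

lemma matPos_add {m : ℕ} {M₁ M₂ : Matrix (Fin m) (Fin m) (Hs →L[ℂ] Hs)}
    (h₁ : MatPos M₁) (h₂ : MatPos M₂) : MatPos (M₁ + M₂) := by
  obtain ⟨N₁, rfl⟩ := h₁
  obtain ⟨N₂, rfl⟩ := h₂
  obtain ⟨N, hN⟩ := cstar_aux (A := CStarMatrix (Fin m) (Fin m) (Hs →L[ℂ] Hs))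
    (CStarMatrix.ofMatrix N₁) (CStarMatrix.ofMatrix N₂)
  exact ⟨CStarMatrix.ofMatrix.symm N, hN⟩

lemma matPos_sum {m : ℕ} {ι : Type*} (s : Finset ι)
    (M : ι → Matrix (Fin m) (Fin m) (Hs →L[ℂ] Hs))
    (h : ∀ k, MatPos (M k)) : MatPos (∑ k ∈ s, M k) := by
  classical
  induction s using Finset.induction_on with
  | empty => exact ⟨0, by simp⟩
  | insert a s ha ih => rw [Finset.sum_insert ha]; exact matPos_add (h a) ih

lemma inner_e (i j : ℕ) : ⟪e i, e j⟫_ℂ = if i = j then 1 else 0 := by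
  unfold e
  rw [lp.inner_single_left]
  by_cases h : i = j
  · subst h; simp
  · simp [h, lp.single_apply, Pi.single_apply]

lemma E_mul (i j k l : ℕ) : E i j * E k l = if j = k then E i l else 0 := by
  have := InnerProductSpace.rankOne_comp_rankOne (𝕜 := ℂ) (e i) (e j) (e k) (e l)
  rw [inner_e, ite_smul, one_smul, zero_smul] at this
  exact this

lemma star_E (i j : ℕ) : star (E i j) = E j i :=
  InnerProductSpace.adjoint_rankOne (𝕜 := ℂ) (e i) (e j)

def tau (n : ℕ) (Y : Matrix (Fin (n+1)) (Fin (n+1)) ℂ) : Hs →L[ℂ] Hs :=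
  ∑ i : Fin (n+1), ∑ j : Fin (n+1), Y i j • E i j

lemma tau_one (n : ℕ) : tau n 1 = ∑ i : Fin (n+1), E i i := by
  simp [tau, Matrix.one_apply]

lemma tau_mul (n : ℕ) (Y Z) : tau n (Y * Z) = tau n Y * tau n Z := by
  have h : ∀ i j k l : Fin (n+1), (Y i j • E i j) * (Z k l • E k l)
      = if j = k then (Y i j * Z k l) • E i l else 0 := by
    intro i j k l
    rw [smul_mul_smul_comm, E_mul]
    by_cases h : j = k
    · simp [h]
    · simp [h, Fin.val_inj]
  simp only [tau, Finset.sum_mul, Finset.mul_sum, h, Matrix.mul_apply, Finset.sum_smul]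
  simp only [Finset.sum_ite_eq', Finset.sum_ite_eq, Finset.mem_univ, if_true]
  rw [Finset.sum_comm]
  conv_rhs => rw [Finset.sum_comm]
  refine Finset.sum_congr rfl fun l _ => ?_
  exact Finset.sum_comm

lemma tau_star (n : ℕ) (Y) : tau n (star Y) = star (tau n Y) := by
  simp only [tau, star_sum, star_smul, star_E, Matrix.star_apply]
  exact Finset.sum_comm

lemma tau_add (n : ℕ) (Y Z) : tau n (Y + Z) = tau n Y + tau n Z := by
  simp [tau, add_smul, Finset.sum_add_distrib]

lemma tau_sum (n : ℕ) {ι : Type*} (s : Finset ι) (f : ι → _) :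
    tau n (∑ k ∈ s, f k) = ∑ k ∈ s, tau n (f k) :=
  map_sum (AddMonoidHom.mk' (tau n) (tau_add n)) f s

lemma Q_sa (n : ℕ) : star (Qop n) = Qop n := by
  rw [Qop, ← tau_one, star_sub, star_one, ← tau_star, star_one]

lemma Q_idem (n : ℕ) : Qop n * Qop n = Qop n := by
  rw [Qop, ← tau_one, mul_sub, sub_mul, sub_mul, ← tau_mul]; simp

/-- for every `n ≥ 1` (here `n+1`), the map `ψ_{n+1} : M_{n+1}(ℂ) → B(ℓ²(ℕ))`
is unital and completely positive, and its range is contained in `S₀`. -/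
theorem stmt_0 (n : ℕ) :
    psi n 1 = 1 ∧ IsCPfun (psi n) ∧ ∀ Y : Matrix (Fin (n+1)) (Fin (n+1)) ℂ, psi n Y ∈ S0 := by
  refine ⟨?_, ?_, ?_⟩
  · change tau n 1 + _ = _
    rw [Qop, ← tau_one]; simp
  · rintro m M ⟨N, rfl⟩
    have key : (N.conjTranspose * N).map (psi n) =
        (N.map (tau n)).conjTranspose * (N.map (tau n)) +
        ∑ k : Fin (n+1), (N.map (fun Y => Y k 0 • Qop n)).conjTranspose *
          (N.map (fun Y => Y k 0 • Qop n)) := by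
      ext1 a b
      simp only [Matrix.map_apply, Matrix.add_apply, Matrix.sum_apply, Matrix.mul_apply,
        Matrix.conjTranspose_apply]
      change tau n _ + _ = _
      rw [tau_sum]
      congr 1
      · simp only [tau_mul, tau_star]
      · simp only [star_smul, Q_sa, smul_mul_smul_comm, Q_idem, Matrix.sum_apply,
          Matrix.mul_apply, Matrix.star_apply, Finset.sum_smul]
        exact Finset.sum_comm
    rw [key]
    exact matPos_add ⟨_, rfl⟩ (matPos_sum _ _ fun k => ⟨_, rfl⟩)
  · intro Y
    have key : psi n Y = Y 0 0 • (1 : Hs →L[ℂ] Hs) + tau n (Y + (-(Y 0 0)) • 1) := by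
      have h : tau n ((-(Y 0 0)) • 1) = (-(Y 0 0)) • tau n 1 := by
        simp only [tau, Finset.smul_sum, Matrix.smul_apply, smul_assoc]
      rw [tau_add, h]
      change tau n Y + _ = _
      rw [Qop, ← tau_one, smul_sub, neg_smul]; abel
    rw [key]
    refine S0.add_mem (S0.smul_mem _ one_mem_S0) ?_
    refine S0.sum_mem fun i _ => S0.sum_mem fun j _ => ?_
    by_cases hij : ((i : ℕ), (j : ℕ)) = (0, 0)
    · have hi : i = 0 := Fin.ext (by simpa using (Prod.ext_iff.mp hij).1)
      have hj : j = 0 := Fin.ext (by simpa using (Prod.ext_iff.mp hij).2)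
      subst hi hj
      simp
    · exact S0.smul_mem _ (Submodule.mem_sup_right
        (Submodule.le_topologicalClosure _ (Submodule.subset_span ⟨i, j, hij, rfl⟩)))
end
end

section
/- Let X₀ ∈ B(ℓ²(ℕ)) be a bounded operator with ⟨X₀e_1, e_1⟩ = 0 and let μ ∈ ℂ. Then μI + X₀ is a positive operator if and only if for every pair (β, T₀) — with T₀ a trace class operator satisfying ⟨T₀e_1, e_1⟩ = 0 and β ∈ ℂ such that the functional λI + K ↦ βλ + Σ_{(i,j)≠(1,1)} t_{i,j} k_{i,j} is positive on S₀ — one has μβ + Σ_{(i,j)≠(1,1)} x_{i,j} t_{i,j} ≥ 0, where x_{i,j} = ⟨X₀e_j, e_i⟩ and t_{i,j} = ⟨T₀e_j, e_i⟩. -/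
noncomputable section

open scoped ComplexOrder InnerProductSpace

set_option synthInstance.maxHeartbeats 1000000

/-- The absolute value `|T| = √(T*T)` of a bounded operator on ℓ²(ℕ). -/
def absOp (T : Hs →L[ℂ] Hs) : Hs →L[ℂ] Hs :=
  haveI : NonUnitalContinuousFunctionalCalculus ℝ (Hs →L[ℂ] Hs) IsSelfAdjoint :=
    IsSelfAdjoint.instNonUnitalContinuousFunctionalCalculus (A := Hs →L[ℂ] Hs)
  CFC.sqrt (star T * T)

/-- `T` is trace class: `T` is compact and `Σᵢ ⟨|T|eᵢ, eᵢ⟩ < ∞`. -/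
def TraceClass (T : Hs →L[ℂ] Hs) : Prop :=
  IsCompactOperator ⇑T ∧ Summable (fun i : ℕ => (⟪e i, absOp T (e i)⟫_ℂ).re)

/-- The trace `tr(T) = Σᵢ ⟨T eᵢ, eᵢ⟩` of a (trace class) operator. -/
def traceOp (T : Hs →L[ℂ] Hs) : ℂ := ∑' i : ℕ, entry T i i

lemma inner_e_left (i : ℕ) (x : Hs) : ⟪e i, x⟫_ℂ = x i := by
  simp [e, lp.inner_single_left]

lemma e_apply (i j : ℕ) : (e i : Hs) j = if j = i then 1 else 0 := by
  by_cases h : j = i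
  · subst h; simp [e]
  · simp [e, lp.single_apply_ne, h]

lemma E_apply (i j : ℕ) (x : Hs) : E i j x = x j • e i := by
  simp [E, inner_e_left]

lemma entry_E (i j a b : ℕ) : entry (E i j) a b = if a = i ∧ b = j then 1 else 0 := by
  simp only [entry, E_apply, inner_smul_right, inner_e_left, e_apply]
  by_cases h1 : a = i <;> by_cases h2 : j = b <;> simp [h1, h2, eq_comm (a := b)]

lemma entry_add (S T : Hs →L[ℂ] Hs) (a b : ℕ) : entry (S + T) a b = entry S a b + entry T a b := by
  simp [entry, inner_add_right]

lemma entry_smul (c : ℂ) (T : Hs →L[ℂ] Hs) (a b : ℕ) : entry (c • T) a b = c * entry T a b := by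
  simp [entry, inner_smul_right]

lemma entry_sum {ι : Type*} (s : Finset ι) (f : ι → Hs →L[ℂ] Hs) (a b : ℕ) :
    entry (∑ i ∈ s, f i) a b = ∑ i ∈ s, entry (f i) a b := by
  simp [entry, ContinuousLinearMap.sum_apply, inner_sum]

lemma entry_cont (a b : ℕ) : Continuous (fun T : Hs →L[ℂ] Hs => entry T a b) := by
  unfold entry
  fun_prop

lemma K0_entry (K : Hs →L[ℂ] Hs) (hK : K ∈ K0) : entry K 0 0 = 0 := by
  let Z : Submodule ℂ (Hs →L[ℂ] Hs) :=
    { carrier := {T | entry T 0 0 = 0}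
      add_mem' := by
        intro S T hS hT
        simp only [Set.mem_setOf_eq] at *
        rw [entry_add, hS, hT, add_zero]
      zero_mem' := by simp [entry]
      smul_mem' := by
        intro c T hT
        simp only [Set.mem_setOf_eq] at *
        rw [entry_smul, hT, mul_zero] }
  have hZ : IsClosed (Z : Set (Hs →L[ℂ] Hs)) :=
    isClosed_eq (entry_cont 0 0) continuous_const
  have : K0 ≤ Z := by
    refine Submodule.topologicalClosure_minimal _ ?_ hZ
    rw [Submodule.span_le]
    rintro T ⟨i, j, hij, rfl⟩
    change entry (E i j) 0 0 = 0
    rw [entry_E, if_neg]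
    rintro ⟨rfl, rfl⟩
    exact hij rfl
  exact this hK

/-- finite matrix -/
def fin (n : ℕ) (c : ℕ × ℕ → ℂ) : Hs →L[ℂ] Hs :=
  ∑ p ∈ Finset.range n ×ˢ Finset.range n, c p • E p.1 p.2

lemma entry_fin (n : ℕ) (c : ℕ × ℕ → ℂ) (p : ℕ × ℕ) :
    entry (fin n c) p.1 p.2 = if p ∈ Finset.range n ×ˢ Finset.range n then c p else 0 := by
  rw [fin, entry_sum]
  simp only [entry_smul, entry_E]
  rw [← Finset.sum_ite_eq]
  refine Finset.sum_congr rfl fun q _ => ?_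
  by_cases h : p = q
  · simp [h]
  · rw [if_neg h, if_neg, mul_zero]
    rintro ⟨h1, h2⟩
    exact h (Prod.ext h1 h2)

lemma fin_mem (n : ℕ) (c : ℕ × ℕ → ℂ) (hc : c (0,0) = 0) : fin n c ∈ K0 := by
  refine Submodule.le_topologicalClosure _ ?_
  refine Submodule.sum_mem _ fun p _ => ?_
  by_cases h : p = (0,0)
  · rw [h, hc, zero_smul]; exact Submodule.zero_mem _
  · exact Submodule.smul_mem _ _ (Submodule.subset_span ⟨p.1, p.2, h, rfl⟩)

lemma fin_compact (n : ℕ) (c : ℕ × ℕ → ℂ) : IsCompactOperator ⇑(fin n c) := by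
  have : fin n c ∈ compactOperator (RingHom.id ℂ) Hs Hs := by
    refine Submodule.sum_mem _ fun p _ => Submodule.smul_mem _ _ ?_
    change IsCompactOperator ⇑(E p.1 p.2)
    have h : IsCompactOperator ⇑(innerSL ℂ (e p.2)) :=
      isCompactOperator_of_locallyCompactSpace_dom (innerSL ℂ (e p.2))
    exact h.clm_comp ((ContinuousLinearMap.id ℂ ℂ).smulRight (e p.1))
  exact this

lemma absOp_zero (T : Hs →L[ℂ] Hs) (x : Hs) (h : T x = 0) : absOp T x = 0 := by
  haveI : NonUnitalContinuousFunctionalCalculus ℝ (Hs →L[ℂ] Hs) IsSelfAdjoint :=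
    IsSelfAdjoint.instNonUnitalContinuousFunctionalCalculus (A := Hs →L[ℂ] Hs)
  have h0 : (0 : Hs →L[ℂ] Hs) ≤ star T * T := star_mul_self_nonneg T
  have h1 : absOp T * absOp T = star T * T := CFC.sqrt_mul_sqrt_self _ h0
  have h2 : IsSelfAdjoint (absOp T) := IsSelfAdjoint.of_nonneg (CFC.sqrt_nonneg _)
  have h3 : ⟪absOp T x, absOp T x⟫_ℂ = 0 := by
    have : ⟪absOp T x, absOp T x⟫_ℂ = ⟪(absOp T * absOp T) x, x⟫_ℂ := by
      rw [ContinuousLinearMap.mul_apply]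
      exact (h2.isSymmetric (absOp T x) x).symm
    rw [this, h1]
    simp [h]
  exact inner_self_eq_zero.1 h3

lemma fin_tc (n : ℕ) (c : ℕ × ℕ → ℂ) : TraceClass (fin n c) := by
  refine ⟨fin_compact n c, ?_⟩
  refine summable_of_ne_finset_zero (s := Finset.range n) fun i hi => ?_
  rw [absOp_zero, inner_zero_right, Complex.zero_re]
  rw [fin, ContinuousLinearMap.sum_apply]
  refine Finset.sum_eq_zero fun p hp => ?_
  rw [ContinuousLinearMap.smul_apply, E_apply, e_apply, if_neg, zero_smul, smul_zero]
  rintro rfl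
  simp only [Finset.mem_product] at hp
  exact hi hp.2

lemma pos_iff (T : Hs →L[ℂ] Hs) : T.IsPositive ↔ ∀ x, 0 ≤ ⟪x, T x⟫_ℂ := by
  constructor
  · intro h x
    exact h.inner_nonneg_right x
  · intro h
    rw [ContinuousLinearMap.isPositive_iff_complex]
    intro x
    have hx := h x
    have h2 : ⟪T x, x⟫_ℂ = ⟪x, T x⟫_ℂ := by
      rw [← inner_conj_symm]
      exact (Complex.nonneg_iff.1 hx |>.2 |> fun h => Complex.conj_eq_iff_im.2 h.symm)
    rw [h2]
    rw [Complex.nonneg_iff] at hx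
    exact ⟨Complex.ext (by simp) (by simpa using hx.2), hx.1⟩

/-- truncation -/
def tr (n : ℕ) (x : Hs) : Hs := ∑ i ∈ Finset.range n, x i • e i

lemma tr_tendsto (x : Hs) : Filter.Tendsto (fun n => tr n x) Filter.atTop (nhds x) := by
  have h := (lp.hasSum_single (by norm_num : (2 : ENNReal) ≠ ⊤) x).tendsto_sum_nat
  refine h.congr fun n => Finset.sum_congr rfl fun i _ => ?_
  rw [e, ← lp.single_smul]; simp

lemma quad (n : ℕ) (x : Hs) (c : ℂ) (K : Hs →L[ℂ] Hs) :
    ⟪tr n x, (c • (1 : Hs →L[ℂ] Hs) + K) (tr n x)⟫_ℂ =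
      (∑ i ∈ Finset.range n, star (x i) * x i) * c +
      ∑ p ∈ Finset.range n ×ˢ Finset.range n, (star (x p.1) * x p.2) * entry K p.1 p.2 := by
  rw [ContinuousLinearMap.add_apply, inner_add_right]
  congr 1
  · simp only [ContinuousLinearMap.smul_apply, ContinuousLinearMap.one_apply, inner_smul_right]
    rw [mul_comm]
    congr 1
    simp only [tr, sum_inner, inner_sum, inner_smul_left, inner_smul_right, inner_e_left, e_apply]
    refine Finset.sum_congr rfl fun i hi => ?_
    simp at hi
    simp [hi, mul_comm]
  · rw [Finset.sum_product_right]
    simp only [tr, map_sum, map_smul, sum_inner, inner_sum, inner_smul_left, inner_smul_right]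
    refine Finset.sum_congr rfl fun i hi => ?_
    rw [Finset.mul_sum]
    refine Finset.sum_congr rfl fun j hj => ?_
    simp [entry]; ring

lemma inner_fin (n : ℕ) (X : Hs →L[ℂ] Hs) (x : Hs) :
    ⟪x, fin n (fun p => entry X p.1 p.2) x⟫_ℂ = ⟪tr n x, X (tr n x)⟫_ℂ := by
  have := quad n x 0 X
  simp only [zero_smul, zero_add, mul_zero] at this
  rw [this, fin, ContinuousLinearMap.sum_apply, inner_sum]
  refine Finset.sum_congr rfl fun p _ => ?_
  rw [ContinuousLinearMap.smul_apply, E_apply, inner_smul_right, inner_smul_right,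
    ← inner_conj_symm, inner_e_left]
  simp; ring

lemma tr_le (n : ℕ) (x : Hs) : ⟪tr n x, tr n x⟫_ℂ ≤ ⟪x, x⟫_ℂ := by
  have hz : ∀ z : Hs, (∀ i < n, z i = 0) → ⟪z, tr n x⟫_ℂ = 0 := by
    intro z hz
    rw [tr, inner_sum]
    refine Finset.sum_eq_zero fun i hi => ?_
    rw [inner_smul_right, ← inner_conj_symm, inner_e_left, hz i (Finset.mem_range.1 hi)]
    simp
  have h : ⟪x - tr n x, tr n x⟫_ℂ = 0 := by
    refine hz _ fun i hi => ?_
    have : (tr n x : Hs) i = x i := by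
      rw [← inner_e_left, tr, inner_sum]
      simp [inner_smul_right, inner_e_left, e_apply, hi]
    simp [this]
  have h' : ⟪tr n x, x - tr n x⟫_ℂ = 0 := by rw [← inner_conj_symm, h, map_zero]
  have h2 : ⟪x, x⟫_ℂ = ⟪tr n x, tr n x⟫_ℂ + ⟪x - tr n x, x - tr n x⟫_ℂ := by
    conv_lhs => rw [show x = tr n x + (x - tr n x) by abel]
    rw [inner_add_left, inner_add_right, inner_add_right, h, h']
    ring
  rw [h2]
  refine le_add_of_nonneg_right ?_
  exact (pos_iff 1).1 ContinuousLinearMap.isPositive_one _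

/-- let `X₀ ∈ B(ℓ²(ℕ))` have vanishing (0,0) entry and `μ ∈ ℂ`. Then
`μI + X₀` is a positive operator iff for every pair `(β, T₀)` — `T₀` trace class with
vanishing (0,0) entry and `β ∈ ℂ` such that `λI + K ↦ βλ + Σ_{(i,j)≠(0,0)} t_{ij} k_{ij}`
is a positive functional on `S₀` — one has `μβ + Σ_{(i,j)≠(0,0)} x_{ij} t_{ij} ≥ 0`. -/
theorem stmt_9 (X₀ : Hs →L[ℂ] Hs) (hX : entry X₀ 0 0 = 0) (μ : ℂ) :
    (μ • (1 : Hs →L[ℂ] Hs) + X₀).IsPositive ↔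
      ∀ (β : ℂ) (T₀ : Hs →L[ℂ] Hs), TraceClass T₀ → entry T₀ 0 0 = 0 →
        (∀ (lam : ℂ) (K : Hs →L[ℂ] Hs), K ∈ K0 →
          (lam • (1 : Hs →L[ℂ] Hs) + K).IsPositive →
          0 ≤ β * lam + ∑' p : ℕ × ℕ,
            (if p = (0, 0) then 0 else entry T₀ p.1 p.2 * entry K p.1 p.2)) →
        0 ≤ μ * β + ∑' p : ℕ × ℕ,
          (if p = (0, 0) then 0 else entry X₀ p.1 p.2 * entry T₀ p.1 p.2) := by
  constructor
  · intro hpos β T₀ _ _ hT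
    rw [pos_iff] at hpos
    have hμ : 0 ≤ μ := by
      have h := hpos (e 0)
      have h2 : ⟪e 0, X₀ (e 0)⟫_ℂ = 0 := hX
      rw [ContinuousLinearMap.add_apply, inner_add_right, h2, ContinuousLinearMap.smul_apply,
        inner_smul_right, ContinuousLinearMap.one_apply, inner_e_left, e_apply] at h
      simpa using h
    have key : ∀ n : ℕ, 0 ≤ μ * β + ∑ p ∈ Finset.range n ×ˢ Finset.range n,
        (if p = (0, 0) then 0 else entry X₀ p.1 p.2 * entry T₀ p.1 p.2) := by
      intro n
      have h := hT μ (fin n fun p => entry X₀ p.1 p.2) (fin_mem _ _ hX) (by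
        rw [pos_iff]
        intro x
        have h1 := hpos (tr n x)
        rw [ContinuousLinearMap.add_apply, inner_add_right] at h1 ⊢
        rw [inner_fin]
        refine h1.trans (add_le_add_left ?_ _)
        simp only [ContinuousLinearMap.smul_apply, ContinuousLinearMap.one_apply, inner_smul_right]
        exact mul_le_mul_of_nonneg_left (tr_le n x) hμ)
      rw [mul_comm μ]
      convert h using 2
      rw [tsum_eq_sum (s := Finset.range n ×ˢ Finset.range n)]
      · refine Finset.sum_congr rfl fun p hp => ?_
        rw [entry_fin, if_pos hp, mul_comm]
      · intro p hp
        rw [entry_fin, if_neg hp, mul_zero, ite_self]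
    by_cases hs : Summable fun p : ℕ × ℕ =>
        (if p = (0, 0) then 0 else entry X₀ p.1 p.2 * entry T₀ p.1 p.2)
    · have hsum := hs.hasSum
      have ht : Filter.Tendsto (fun n => Finset.range n ×ˢ Finset.range n)
          Filter.atTop (Filter.atTop : Filter (Finset (ℕ × ℕ))) := by
        refine Filter.tendsto_atTop_finset_of_monotone ?_ ?_
        · intro a b hab
          exact Finset.product_subset_product (Finset.range_mono hab) (Finset.range_mono hab)
        · intro p
          refine ⟨p.1 + p.2 + 1, ?_⟩
          simp only [Finset.mem_product, Finset.mem_range]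
          omega
      have h3 := (Filter.Tendsto.comp hsum ht).const_add (μ * β)
      exact ge_of_tendsto' h3 key
    · rw [tsum_eq_zero_of_not_summable hs]
      simpa using key 0
  · intro h
    rw [pos_iff]
    intro x
    have key : ∀ n, 0 ≤ ⟪tr n x, (μ • (1 : Hs →L[ℂ] Hs) + X₀) (tr n x)⟫_ℂ := by
      intro n
      let c : ℕ × ℕ → ℂ := fun p => if p = (0, 0) then 0 else star (x p.1) * x p.2
      have hq : ∀ (lam : ℂ) (K : Hs →L[ℂ] Hs), entry K 0 0 = 0 →
          ⟪tr n x, (lam • (1 : Hs →L[ℂ] Hs) + K) (tr n x)⟫_ℂ =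
          (∑ i ∈ Finset.range n, star (x i) * x i) * lam + ∑' p : ℕ × ℕ,
            (if p = (0, 0) then 0 else entry (fin n c) p.1 p.2 * entry K p.1 p.2) := by
        intro lam K hK
        rw [quad, tsum_eq_sum (s := Finset.range n ×ˢ Finset.range n)]
        · congr 1
          refine Finset.sum_congr rfl fun p hp => ?_
          rw [entry_fin, if_pos hp]
          by_cases h0 : p = (0, 0)
          · simp [h0, hK]
          · simp [c, h0]
        · intro p hp
          rw [entry_fin, if_neg hp, zero_mul, ite_self]
      rw [hq μ X₀ hX, mul_comm]
      have := h (∑ i ∈ Finset.range n, star (x i) * x i) (fin n c) (fin_tc n c) (by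
        have := entry_fin n c (0, 0)
        simpa [c] using this) (by
        intro lam K hK hp
        rw [← hq lam K (K0_entry K hK)]
        exact (pos_iff _).1 hp _)
      simpa only [mul_comm] using this
    have ht := tr_tendsto x
    exact ge_of_tendsto' (ht.inner (((μ • (1 : Hs →L[ℂ] Hs) + X₀).continuous.tendsto x).comp ht)) key
end
end

section
/- Let S ⊆ B(H) be a finite-dimensional unital self-adjoint subspace of the bounded operators on a complex Hilbert space H (a finite-dimensional concrete operator system). Suppose there exist nets of unital completely positive maps φ_λ : S → M_{n_λ}(ℂ) and ψ_λ : M_{n_λ}(ℂ) → S such that ψ_λ ∘ φ_λ converges to the identity map of S in the point-norm topology. Then S is unitally completely order isomorphic to a finite direct sum of matrix algebras M_{m_1}(ℂ) ⊕ ⋯ ⊕ M_{m_k}(ℂ): there is a unital linear bijection from S onto such a direct sum such that the map and its inverse are completely positive. -/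
noncomputable section

/-- Complete positivity for a map defined on a subspace `S` of a C*-algebra `A`:
matrices over `S` which are positive in the C*-algebra of matrices over `A` are
mapped to positive matrices. -/
def IsCPsub {A B : Type*} [Ring A] [StarRing A] [Module ℂ A] [Ring B] [StarRing B]
    (S : Submodule ℂ A) (θ : ↥S → B) : Prop :=
  ∀ (m : ℕ) (M : Matrix (Fin m) (Fin m) ↥S),
    MatPos (M.map (fun x => (x : A))) → MatPos (M.map θ)

section Aux
open scoped ComplexOrder

theorem aux_ss {T : Type*} [Ring T] [StarRing T] [Algebra ℂ T] [FiniteDimensional ℂ T]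
    (hp : ∀ x : T, star x * x = 0 → x = 0) : IsSemisimpleRing T := by
  have : IsArtinianRing T := IsArtinianRing.of_finite ℂ T
  rw [IsArtinianRing.isSemisimpleRing_iff_jacobson, eq_bot_iff]
  intro x hx
  have hsa : ∀ k : ℕ, ∀ h : T, star h = h → h ^ (2 ^ k) = 0 → h = 0 := by
    intro k
    induction k with
    | zero => intro h _ h0; simpa using h0
    | succ k ih =>
      intro h hs h0
      apply hp
      rw [hs]
      apply ih
      · simp [hs]
      · rw [← pow_two, ← pow_mul, ← pow_succ']; exact h0
  obtain ⟨n, hn⟩ := IsArtinianRing.isNilpotent_jacobson_bot (R := T)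
  have hmem : star x * x ∈ Ideal.jacobson (⊥ : Ideal T) := by
    rw [Ideal.jacobson_bot]
    exact Ideal.mul_mem_left _ _ hx
  have h1 : (star x * x) ^ n = 0 := by
    have := Ideal.pow_mem_pow hmem n
    rw [hn] at this
    simpa using this
  apply hp
  apply hsa n _ (by simp)
  exact pow_eq_zero_of_le (Nat.lt_two_pow_self).le h1

theorem aux_struct {T : Type*} [Ring T] [StarRing T] [Algebra ℂ T] [StarModule ℂ T]
    [FiniteDimensional ℂ T]
    (hf : ∀ x : T, x ≠ 0 → ∃ f : T →ₗ[ℂ] ℂ, (∀ y, 0 ≤ f (star y * y)) ∧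
      (∀ y, f (star y) = star (f y)) ∧ f (star x * x) ≠ 0) :
    ∃ (k : ℕ) (m : Fin k → ℕ)
      (γ : T ≃ₐ[ℂ] ((i : Fin k) → Matrix (Fin (m i)) (Fin (m i)) ℂ)),
      (∀ i, NeZero (m i)) ∧ ∀ x, γ (star x) = star (γ x) := by
  have : IsSemisimpleRing T := aux_ss (fun x hx => by
    by_contra h
    obtain ⟨f, -, -, h3⟩ := hf x h
    rw [hx] at h3; simp at h3)
  obtain ⟨k, m, hm, ⟨g⟩⟩ := IsSemisimpleRing.exists_algEquiv_pi_matrix_of_isAlgClosed ℂ T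
  have key : ∀ i, ∃ B C : Matrix (Fin (m i)) (Fin (m i)) ℂ, B * C = 1 ∧ C * B = 1 ∧
      ∀ a : T, (B * g (star a) i * C) = (B * g a i * C).conjTranspose := by
    intro i
    have := hm i
    let j0 : Fin (m i) := 0
    let X : Fin (m i) → T := fun v => g.symm (Pi.single i (Matrix.single v j0 1))
    have hX0 : X j0 ≠ 0 := by
      intro h
      have h' := congrFun (congrArg g h) i
      simp only [X, AlgEquiv.apply_symm_apply, Pi.single_eq_same, map_zero, Pi.zero_apply] at h'
      have := congrFun (congrFun h' j0) j0
      simp at this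
    obtain ⟨f, f1, f2, f3⟩ := hf _ hX0
    let h : Matrix (Fin (m i)) (Fin (m i)) ℂ := Matrix.of fun v w => f (star (X v) * X w)
    have hact : ∀ (a : T) v, a * X v = ∑ u, g a i u v • X u := by
      intro a v
      apply g.injective
      simp only [map_mul, map_sum, map_smul, X, AlgEquiv.apply_symm_apply]
      funext i'
      by_cases hi : i' = i
      · subst hi
        ext s t
        simp [Matrix.mul_apply, Matrix.single_apply, Matrix.sum_apply, Finset.sum_apply]
        by_cases ht : j0 = t <;> simp [ht, eq_comm]
      · simp [Finset.sum_apply, hi]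
    have hh : ∀ a : T, (g a i).conjTranspose * h = h * g (star a) i := by
      intro a
      ext v w
      have e1 : f (star (a * X v) * X w) = ((g a i).conjTranspose * h) v w := by
        rw [hact a v]
        simp [Matrix.mul_apply, h, Finset.sum_mul, star_sum]
      have e2 : f (star (X v) * (star a * X w)) = (h * g (star a) i) v w := by
        rw [hact _ w]
        simp [Matrix.mul_apply, h, Finset.mul_sum, mul_comm]
      rw [← e1, ← e2, star_mul, mul_assoc]
    have hherm : h.IsHermitian := by
      ext v w
      simp only [Matrix.conjTranspose_apply, h, Matrix.of_apply]
      rw [← f2]; simp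
    have hpsd : h.PosSemidef := by
      refine Matrix.PosSemidef.of_dotProduct_mulVec_nonneg hherm fun x => ?_
      have := f1 (∑ v, x v • X v)
      convert this using 1
      simp [dotProduct, Matrix.mulVec, h, star_sum, Finset.sum_mul, Finset.mul_sum]
      rw [Finset.sum_comm]
      refine Finset.sum_congr rfl fun a _ => Finset.sum_congr rfl fun b _ => ?_
      ring
    have hinj : ∀ v, h.mulVec v = 0 → v = 0 := by
      intro v hv
      by_contra hv0
      have hvv : star v ⬝ᵥ v ≠ 0 := by
        simpa [dotProduct_star_self_eq_zero] using hv0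
      have hz : ∀ w, h.mulVec w = 0 := by
        intro w
        let Z : Matrix (Fin (m i)) (Fin (m i)) ℂ := (star v ⬝ᵥ v)⁻¹ • Matrix.vecMulVec w (star v)
        have hZ : Z.mulVec v = w := by
          simp only [Z, Matrix.smul_mulVec, Matrix.vecMulVec_mulVec]
          ext s
          simp
          field_simp
        have := hh (star (g.symm (Pi.single i Z)))
        rw [star_star] at this
        simp only [AlgEquiv.apply_symm_apply, Pi.single_eq_same] at this
        rw [← hZ, Matrix.mulVec_mulVec, ← this, ← Matrix.mulVec_mulVec, hv, Matrix.mulVec_zero]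
      apply f3
      have := congrFun (hz (Pi.single j0 1)) j0
      simpa [h] using this
    obtain ⟨B, hB⟩ : ∃ B : Matrix (Fin (m i)) (Fin (m i)) ℂ, h = B.conjTranspose * B := by
      open scoped MatrixOrder Matrix.Norms.L2Operator in
      exact CStarAlgebra.nonneg_iff_eq_star_mul_self.mp hpsd.nonneg
    have hBu : IsUnit B := by
      rw [← Matrix.mulVec_injective_iff_isUnit]
      refine (injective_iff_map_eq_zero (Matrix.mulVecLin B)).mpr ?_
      intro v hv
      apply hinj
      rw [hB, ← Matrix.mulVec_mulVec]
      have : B.mulVec v = 0 := hv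
      rw [this, Matrix.mulVec_zero]
    obtain ⟨u, rfl⟩ := hBu
    refine ⟨u, ↑u⁻¹, by simp, by simp, fun a => ?_⟩
    have h1 := hh a
    rw [hB] at h1
    have hu : (↑u⁻¹ : Matrix (Fin (m i)) (Fin (m i)) ℂ).conjTranspose * (↑u : Matrix (Fin (m i)) (Fin (m i)) ℂ).conjTranspose = 1 := by
      rw [← Matrix.conjTranspose_mul]; simp
    rw [Matrix.conjTranspose_mul, Matrix.conjTranspose_mul]
    set P := (↑u : Matrix (Fin (m i)) (Fin (m i)) ℂ).conjTranspose
    set Q := (↑u⁻¹ : Matrix (Fin (m i)) (Fin (m i)) ℂ).conjTranspose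
    calc (↑u * g (star a) i * ↑u⁻¹ : Matrix (Fin (m i)) (Fin (m i)) ℂ)
        = Q * (P * ↑u * g (star a) i) * ↑u⁻¹ := by
          simp only [← mul_assoc]; rw [hu, one_mul]
      _ = Q * ((g a i).conjTranspose * (P * ↑u)) * ↑u⁻¹ := by rw [h1]
      _ = Q * ((g a i).conjTranspose * P) := by
          simp only [mul_assoc]; simp
  choose B C hBC hCB hst using key
  let conj : ((i : Fin k) → Matrix (Fin (m i)) (Fin (m i)) ℂ) ≃ₐ[ℂ]
      ((i : Fin k) → Matrix (Fin (m i)) (Fin (m i)) ℂ) :=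
    AlgEquiv.ofAlgHom
      (AlgHom.ofLinearMap
        { toFun := fun x i => B i * x i * C i
          map_add' := fun x y => by funext i; simp [mul_add, add_mul]
          map_smul' := fun c x => by funext i; simp }
        (by funext i; simp [hBC])
        (fun x y => by
          funext i
          simp only [LinearMap.coe_mk, AddHom.coe_mk, Pi.mul_apply]
          calc B i * (x i * y i) * C i = B i * x i * 1 * (y i * C i) := by simp [mul_assoc]
            _ = _ := by rw [← hCB]; simp [mul_assoc]))
      (AlgHom.ofLinearMap
        { toFun := fun x i => C i * x i * B i
          map_add' := fun x y => by funext i; simp [mul_add, add_mul]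
          map_smul' := fun c x => by funext i; simp }
        (by funext i; simp [hCB])
        (fun x y => by
          funext i
          simp only [LinearMap.coe_mk, AddHom.coe_mk, Pi.mul_apply]
          calc C i * (x i * y i) * B i = C i * x i * 1 * (y i * B i) := by simp [mul_assoc]
            _ = _ := by rw [← hBC]; simp [mul_assoc]))
      (by
        ext1 x; funext i
        simp only [AlgHom.comp_apply, AlgHom.ofLinearMap_apply, LinearMap.coe_mk, AddHom.coe_mk, AlgHom.id_apply]
        calc B i * (C i * x i * B i) * C i = (B i * C i) * x i * (B i * C i) := by simp [mul_assoc]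
          _ = x i := by simp [hBC])
      (by
        ext1 x; funext i
        simp only [AlgHom.comp_apply, AlgHom.ofLinearMap_apply, LinearMap.coe_mk, AddHom.coe_mk, AlgHom.id_apply]
        calc C i * (B i * x i * C i) * B i = (C i * B i) * x i * (C i * B i) := by simp [mul_assoc]
          _ = x i := by simp [hCB])
  refine ⟨k, m, g.trans conj, hm, fun x => ?_⟩
  funext i
  exact hst i x

theorem aux_struct' {V : Type*} [AddCommGroup V] [Module ℂ V] [FiniteDimensional ℂ V]
    (o : V →ₗ[ℂ] V →ₗ[ℂ] V) (e : V) (st : V → V)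
    (hassoc : ∀ x y z, o (o x y) z = o x (o y z))
    (h1l : ∀ x, o e x = x) (h1r : ∀ x, o x e = x)
    (hst_add : ∀ x y, st (x + y) = st x + st y)
    (hst_smul : ∀ (c : ℂ) x, st (c • x) = star c • st x)
    (hst_mul : ∀ x y, st (o x y) = o (st y) (st x))
    (hst_inv : ∀ x, st (st x) = x)
    (hf : ∀ x : V, x ≠ 0 → ∃ f : V →ₗ[ℂ] ℂ, (∀ y, 0 ≤ f (o (st y) y)) ∧
      (∀ y, f (st y) = star (f y)) ∧ f (o (st x) x) ≠ 0) :
    ∃ (k : ℕ) (m : Fin k → ℕ)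
      (γ : V ≃ₗ[ℂ] ((i : Fin k) → Matrix (Fin (m i)) (Fin (m i)) ℂ)),
      (∀ i, NeZero (m i)) ∧ γ e = 1 ∧ (∀ x y, γ (o x y) = γ x * γ y) ∧
        ∀ x, γ (st x) = star (γ x) := by
  let R : Ring V :=
    { (inferInstance : AddCommGroup V) with
      mul := fun x y => o x y
      one := e
      mul_assoc := hassoc
      one_mul := h1l
      mul_one := h1r
      left_distrib := fun x y z => map_add (o x) y z
      right_distrib := fun x y z => by
        change o (x + y) z = o x z + o y z
        simp
      zero_mul := fun x => by
        change o 0 x = 0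
        simp
      mul_zero := fun x => map_zero (o x) }
  let : Algebra ℂ V := Algebra.ofModule
    (fun c x y => by change o (c • x) y = c • o x y; simp)
    (fun c x y => map_smul (o x) c y)
  let : StarRing V :=
    { star := st
      star_involutive := hst_inv
      star_mul := hst_mul
      star_add := hst_add }
  let : StarModule ℂ V := ⟨hst_smul⟩
  obtain ⟨k, m, γ, h1, h2⟩ := aux_struct (T := V) hf
  exact ⟨k, m, γ.toLinearEquiv, h1, map_one γ, map_mul γ, h2⟩

section
variable {H' : Type*} [NormedAddCommGroup H'] [InnerProductSpace ℂ H'] [CompleteSpace H']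

theorem MatPos.diag_nonneg {n : ℕ} {M : Matrix (Fin n) (Fin n) (H' →L[ℂ] H')} (h : MatPos M)
    (i : Fin n) (ξ : H') : 0 ≤ inner ℂ ξ (M i i ξ) := by
  obtain ⟨N, rfl⟩ := h
  simp only [Matrix.mul_apply, Matrix.conjTranspose_apply, sum_apply,
    inner_sum]
  refine Finset.sum_nonneg fun k _ => ?_
  rw [mul_apply_eq_comp, ContinuousLinearMap.star_eq_adjoint,
    ContinuousLinearMap.adjoint_inner_right]
  rw [inner_self_eq_norm_sq_to_K]
  positivity

theorem op_zero (X : H' →L[ℂ] H') (h : ∀ ξ, inner ℂ ξ (X ξ) = 0) : X = 0 := by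
  have : (X : H' →ₗ[ℂ] H') = 0 := by
    rw [← inner_map_self_eq_zero]
    intro x
    rw [← inner_conj_symm]
    simp [h x]
  ext x
  exact congrArg (fun f => f x) this

theorem quad_aux (r : ℝ) (s : ℝ) (h : ∀ t : ℝ, 0 ≤ t * r + t ^ 2 * s) : r = 0 := by
  by_contra hr
  have hs : 0 < |s| + 1 := by positivity
  have := h (-r / (|s| + 1))
  have e : -r / (|s| + 1) * r + (-r / (|s| + 1)) ^ 2 * s
      = (r ^ 2 / (|s| + 1) ^ 2) * (s - (|s| + 1)) := by
    field_simp
    ring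
  rw [e] at this
  have h1 : 0 < r ^ 2 / (|s| + 1) ^ 2 := by positivity
  have h2 : s - (|s| + 1) < 0 := by linarith [le_abs_self s]
  nlinarith

/-- vector functional -/
def vecf (S : Submodule ℂ (H' →L[ℂ] H')) (ξ : H') : ↥S →ₗ[ℂ] ℂ where
  toFun x := inner ℂ ξ ((x : H' →L[ℂ] H') ξ)
  map_add' x y := by simp [inner_add_right]
  map_smul' c x := by simp [inner_smul_right]

set_option maxHeartbeats 2000000 in
theorem aux_abs (S : Submodule ℂ (H' →L[ℂ] H'))
    (hone : (1 : H' →L[ℂ] H') ∈ S) (hstar : ∀ X ∈ S, star X ∈ S)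
    [FiniteDimensional ℂ ↥S]
    {A : Type*} [Ring A] [StarRing A] [Algebra ℂ A] [StarModule ℂ A]
    (Φ : ↥S →ₗ[ℂ] A) (Ψ : A →ₗ[ℂ] ↥S) (hΨΦ : ∀ x, Ψ (Φ x) = x)
    (hΦ1 : Φ ⟨1, hone⟩ = 1)
    (hΦs : ∀ x : ↥S, Φ ⟨star (x : H' →L[ℂ] H'), hstar x x.2⟩ = star (Φ x))
    (hΨs : ∀ a, (Ψ (star a) : H' →L[ℂ] H') = star (Ψ a : H' →L[ℂ] H'))
    (hpos : ∀ (n p : ℕ) (M : Matrix (Fin n) (Fin n) ↥S),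
      MatPos (M.map (fun x => (x : H' →L[ℂ] H'))) → ∀ Y : Matrix (Fin n) (Fin p) A,
      MatPos ((Y.conjTranspose * M.map Φ * Y).map (fun a => (Ψ a : H' →L[ℂ] H')))) :
    ∃ (k : ℕ) (m : Fin k → ℕ)
      (γ : ↥S ≃ₗ[ℂ] ((i : Fin k) → Matrix (Fin (m i)) (Fin (m i)) ℂ)),
      γ ⟨1, hone⟩ = 1 ∧ IsCPsub S γ ∧
      ∀ (mm : ℕ) (M : Matrix (Fin mm) (Fin mm) ((i : Fin k) → Matrix (Fin (m i)) (Fin (m i)) ℂ)),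
        MatPos M → MatPos ((M.map γ.symm).map (fun x => (x : H' →L[ℂ] H'))) := by
  let st : ↥S → ↥S := fun x => ⟨star (x : H' →L[ℂ] H'), hstar x x.2⟩
  let e : ↥S := ⟨1, hone⟩
  have hΨs' : ∀ a, Ψ (star a) = st (Ψ a) := fun a => Subtype.ext (hΨs a)
  have hΦs' : ∀ x, Φ (st x) = star (Φ x) := hΦs
  -- identity matrix
  have hpos1 : ∀ (n p : ℕ) (Y : Matrix (Fin n) (Fin p) A),
      MatPos ((Y.conjTranspose * Y).map (fun a => (Ψ a : H' →L[ℂ] H'))) := by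
    intro n p Y
    have h := hpos n p (Matrix.of fun i j => if i = j then e else 0) ⟨1, by
      ext1 i j
      by_cases hij : i = j <;> simp [hij, e, Matrix.one_apply]⟩ Y
    have h2 : (Matrix.of fun i j : Fin n => if i = j then e else 0).map Φ = 1 := by
      ext1 i j
      by_cases hij : i = j <;> simp [hij, e, Matrix.one_apply, hΦ1]
    rw [h2, Matrix.mul_one] at h
    exact h
  have hvpos : ∀ (ξ : H') (a : A), 0 ≤ vecf S ξ (Ψ (star a * a)) := by
    intro ξ a
    have := (hpos1 1 1 (Matrix.of fun _ _ => a)).diag_nonneg 0 ξ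
    simpa [Matrix.mul_apply, vecf] using this
  have hvst : ∀ ξ x, vecf S ξ (st x) = star (vecf S ξ x) := by
    intro ξ x
    simp only [vecf, LinearMap.coe_mk, AddHom.coe_mk, st]
    rw [ContinuousLinearMap.star_eq_adjoint, ContinuousLinearMap.adjoint_inner_right]
    exact (inner_conj_symm _ _).symm
  have hvext : ∀ x : ↥S, (∀ ξ, vecf S ξ x = 0) → x = 0 := by
    intro x hx
    exact Subtype.ext (op_zero _ hx)
  have hmat2 : ∀ Y : A, MatPos ((!![e, Ψ Y; Ψ (star Y), Ψ (star Y * Y)]).map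
      (fun x => (x : H' →L[ℂ] H'))) := by
    intro Y
    have := hpos1 1 2 (!![1, Y])
    convert this using 1
    ext1 i j
    have he : Ψ 1 = e := by rw [← hΦ1, hΨΦ]
    fin_cases i <;> fin_cases j <;> simp [Matrix.mul_apply, he]
  have hschwarz : ∀ (ξ : H') (Y : A),
      0 ≤ vecf S ξ (Ψ (star Y * Y) - Ψ (star (Φ (Ψ Y)) * Φ (Ψ Y))) := by
    intro ξ Y
    have := (hpos 2 1 _ (hmat2 Y) (!![-Φ (Ψ Y); 1])).diag_nonneg 0 ξ
    convert this using 1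
    simp only [vecf, LinearMap.coe_mk, AddHom.coe_mk, Matrix.map_apply]
    congr 3
    have : ((!![-Φ (Ψ Y); 1] : Matrix (Fin 2) (Fin 1) A).conjTranspose *
        (!![e, Ψ Y; Ψ (star Y), Ψ (star Y * Y)]).map Φ * !![-Φ (Ψ Y); 1]) 0 0
        = Φ (Ψ (star Y * Y)) - star (Φ (Ψ Y)) * Φ (Ψ Y) := by
      have he : Φ e = 1 := hΦ1
      simp [Matrix.mul_apply, Fin.sum_univ_two, he, hΨs', hΦs']
      noncomm_ring
    rw [this, map_sub, hΨΦ]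
  have hkey : ∀ (b : A) (z : ↥S), Ψ b = 0 → Ψ (b * Φ z) = 0 := by
    have hre : ∀ (b : A) (z : ↥S) (ξ : H'), Ψ b = 0 → (vecf S ξ (Ψ (b * Φ z))).re = 0 := by
      intro b z ξ hb
      have h2 : 2 * (vecf S ξ (Ψ (b * Φ z))).re = 0 := by
        apply quad_aux _ (vecf S ξ (Ψ (b * star b))).re
        intro t
        have h := hschwarz ξ (Φ z + (t : ℂ) • star b)
        have hst0 : st 0 = 0 := by rw [← map_zero Ψ, ← hΨs', star_zero]
        have e1 : Ψ (Φ z + (t : ℂ) • star b) = z := by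
          rw [map_add, map_smul, hΨs', hb, hst0, hΨΦ]; simp
        rw [e1] at h
        have e2 : star (Φ z + (t : ℂ) • star b) * (Φ z + (t : ℂ) • star b)
            = star (Φ z) * Φ z + (t : ℂ) • (star (b * Φ z) + b * Φ z)
              + ((t : ℂ) ^ 2) • (b * star b) := by
          simp only [star_add, star_smul, star_star, add_mul, mul_add, smul_mul_assoc,
            mul_smul_comm, star_mul, smul_smul, smul_add, pow_two]
          simp only [RCLike.star_def, Complex.conj_ofReal]
          abel
        rw [e2] at h
        simp only [map_add, map_smul, map_sub, hΨs', hvst] at h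
        have h' := (Complex.le_def.mp h).1
        simp [pow_two] at h'
        linarith
      linarith
    intro b z hb
    apply hvext
    intro ξ
    apply Complex.ext
    · exact hre b z ξ hb
    · have := hre (Complex.I • b) z ξ (by simp [hb])
      simpa using this
  have hkey1 : ∀ (a : A) (z : ↥S), Ψ (Φ (Ψ a) * Φ z) = Ψ (a * Φ z) := by
    intro a z
    have := hkey (Φ (Ψ a) - a) z (by simp [hΨΦ])
    rw [sub_mul, map_sub, sub_eq_zero] at this
    exact this
  have hst_inv : ∀ x, st (st x) = x := fun x => Subtype.ext (star_star _)
  have hkey2 : ∀ (a : A) (z : ↥S), Ψ (Φ z * Φ (Ψ a)) = Ψ (Φ z * a) := by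
    intro a z
    have := congrArg st (hkey1 (star a) (st z))
    rw [← hΨs', ← hΨs', star_mul, star_mul, star_star, hΨs', hΦs', hΦs', star_star, star_star] at this
    exact this
  let o : ↥S →ₗ[ℂ] ↥S →ₗ[ℂ] ↥S := LinearMap.mk₂ ℂ (fun x y => Ψ (Φ x * Φ y))
    (by intro x y z; simp [add_mul]) (by intro c x y; simp)
    (by intro x y z; simp [mul_add]) (by intro c x y; simp)
  have ho : ∀ x y, o x y = Ψ (Φ x * Φ y) := fun x y => rfl
  have hf : ∀ x : ↥S, x ≠ 0 → ∃ f : ↥S →ₗ[ℂ] ℂ, (∀ y, 0 ≤ f (o (st y) y)) ∧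
      (∀ y, f (st y) = star (f y)) ∧ f (o (st x) x) ≠ 0 := by
    intro x hx
    by_contra! hcon
    apply hx
    have h0 : ∀ ξ, vecf S ξ (o (st x) x) = 0 := fun ξ =>
      hcon (vecf S ξ) (fun y => by rw [ho, hΦs']; exact hvpos ξ _) (hvst ξ)
    have h1 : o (st x) x = 0 := hvext _ h0
    have h2 := hmat2 (Φ x)
    have : (x : H' →L[ℂ] H') = 0 := by
      obtain ⟨N, hN⟩ := h2
      have h11 := congrFun (congrFun hN 1) 1
      have h01 := congrFun (congrFun hN 0) 1
      rw [ho, hΦs'] at h1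
      simp [Matrix.mul_apply, Fin.sum_univ_two, h1, hΨΦ] at h11 h01
      have hn : ∀ ξ, ∀ i : Fin 2, N i 1 ξ = 0 := by
        intro ξ
        have h3 : inner ℂ ξ ((star (N 0 1) * N 0 1 + star (N 1 1) * N 1 1) ξ) = (0 : ℂ) := by
          rw [← h11]; simp
        rw [add_apply, inner_add_right, mul_apply_eq_comp,
          mul_apply_eq_comp, ContinuousLinearMap.star_eq_adjoint,
          ContinuousLinearMap.star_eq_adjoint,
          ContinuousLinearMap.adjoint_inner_right, ContinuousLinearMap.adjoint_inner_right,
          inner_self_eq_norm_sq_to_K, inner_self_eq_norm_sq_to_K] at h3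
        have h4 : ‖N 0 1 ξ‖ ^ 2 + ‖N 1 1 ξ‖ ^ 2 = 0 := Complex.ofReal_injective (by push_cast; exact h3)
        have h5 : ‖N 0 1 ξ‖ = 0 := by nlinarith [sq_nonneg ‖N 0 1 ξ‖, sq_nonneg ‖N 1 1 ξ‖]
        have h6 : ‖N 1 1 ξ‖ = 0 := by nlinarith [sq_nonneg ‖N 0 1 ξ‖, sq_nonneg ‖N 1 1 ξ‖]
        intro i
        fin_cases i
        · simpa using h5
        · simpa using h6
      rw [h01]
      ext ξ
      simp [hn]
    exact Subtype.ext this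
  obtain ⟨k, m, γ, hm, g1, gmul, gst⟩ := aux_struct' o e st
    (fun x y z => by simp only [ho]; rw [hkey1, hkey2, mul_assoc])
    (fun x => by
      have he : Φ e = 1 := hΦ1
      rw [ho, he, one_mul, hΨΦ])
    (fun x => by
      have he : Φ e = 1 := hΦ1
      rw [ho, he, mul_one, hΨΦ])
    (fun x y => Subtype.ext (star_add _ _))
    (fun c x => Subtype.ext (star_smul _ _))
    (fun x y => by rw [ho, ← hΨs', star_mul, ← hΦs', ← hΦs', ho])
    hst_inv hf
  refine ⟨k, m, γ, g1, ?_, ?_⟩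
  · intro n M hM
    have hMh : ∀ r s, M r s = st (M s r) := by
      obtain ⟨N, hN⟩ := hM
      have hH : (M.map (fun x => (x : H' →L[ℂ] H'))).IsHermitian := by
        rw [hN]; exact Matrix.isHermitian_conjTranspose_mul_self N
      intro r s
      exact Subtype.ext (hH.apply r s).symm
    have key : ∀ i, ∃ N : Matrix (Fin n) (Fin n) (Matrix (Fin (m i)) (Fin (m i)) ℂ),
        M.map (fun x => γ x i) = N.conjTranspose * N := by
      intro i
      have := hm i
      let j0 : Fin (m i) := 0
      let G : Matrix (Fin n × Fin (m i)) (Fin n × Fin (m i)) ℂ :=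
        Matrix.of fun p q => γ (M p.1 q.1) i p.2 q.2
      have hG : G.PosSemidef := by
        refine Matrix.PosSemidef.of_dotProduct_mulVec_nonneg ?_ fun v => ?_
        · ext p q
          simp only [Matrix.conjTranspose_apply, G, Matrix.of_apply]
          rw [hMh p.1 q.1, gst]
          rfl
        · let q : ↥S := γ.symm (Pi.single i (Matrix.single j0 j0 1))
          have hq : o (st q) q = q := by
            apply γ.injective
            rw [gmul, gst]
            simp only [q, LinearEquiv.apply_symm_apply]
            funext i'
            by_cases hi : i' = i
            · subst hi
              simp [Matrix.star_eq_conjTranspose]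
            · simp [hi]
          have hq0 : q ≠ 0 := by
            intro h
            have h' := congrFun (congrArg γ h) i
            simp only [q, LinearEquiv.apply_symm_apply, Pi.single_eq_same, map_zero,
              Pi.zero_apply] at h'
            have := congrFun (congrFun h' j0) j0
            simp at this
          let y : Fin n → ↥S := fun r =>
            γ.symm (Pi.single i (∑ s, v (r, s) • Matrix.single s j0 (1 : ℂ)))
          let z : ↥S := ∑ r, ∑ s, o (o (st (y r)) (M r s)) (y s)
          have hz : z = (star v ⬝ᵥ G.mulVec v) • q := by
            apply γ.injective
            simp only [z, map_sum, map_smul, gmul, gst, y, q, LinearEquiv.apply_symm_apply]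
            funext i'
            by_cases hi : i' = i
            · subst hi
              ext a b
              simp only [Finset.sum_apply, Pi.mul_apply, Pi.star_apply, Pi.single_eq_same,
                Pi.smul_apply, Matrix.sum_apply, Matrix.smul_apply,
                Matrix.star_eq_conjTranspose]
              simp only [Matrix.mul_apply, Matrix.conjTranspose_apply, Matrix.sum_apply,
                Matrix.smul_apply, Matrix.single_apply, dotProduct, Matrix.mulVec,
                Fintype.sum_prod_type, G, Matrix.of_apply, Pi.star_apply]
              by_cases ha : j0 = a
              · by_cases hb : j0 = b
                · have hab : a = b := ha.symm.trans hb
                  subst hab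
                  simp [ha, Finset.sum_mul, Finset.mul_sum]
                  refine Finset.sum_congr rfl fun r _ => ?_
                  rw [Finset.sum_comm (s := (Finset.univ : Finset (Fin (m i'))))]
                  refine Finset.sum_congr rfl fun t _ => ?_
                  rw [Finset.sum_comm]
                  simp only [mul_assoc]
                · simp [hb]
              · simp [ha]
            · simp [Finset.sum_apply, hi]
          have hzpos : ∀ ξ, 0 ≤ vecf S ξ z := by
            intro ξ
            have := (hpos n 1 M hM (Matrix.of fun r _ => Φ (y r))).diag_nonneg 0 ξ
            convert this using 1
            simp only [vecf, LinearMap.coe_mk, AddHom.coe_mk, Matrix.map_apply]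
            congr 3
            simp only [Matrix.mul_apply, z, ho, hkey1, map_sum, Matrix.conjTranspose_apply,
              Matrix.of_apply, Matrix.map_apply, Finset.sum_mul, hΦs']
            rw [Finset.sum_comm]
          obtain ⟨ξ, hξ⟩ : ∃ ξ, vecf S ξ q ≠ 0 := by
            by_contra! hcon
            exact hq0 (hvext q hcon)
          have hqp : 0 ≤ vecf S ξ q := by
            rw [← hq, ho, hΦs']; exact hvpos ξ _
          have h1 := hzpos ξ
          rw [hz, map_smul, smul_eq_mul] at h1
          have hqp' : 0 < vecf S ξ q := lt_of_le_of_ne hqp (Ne.symm hξ)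
          obtain ⟨q1, q2⟩ := Complex.lt_def.mp hqp'
          obtain ⟨c1, c2⟩ := Complex.le_def.mp h1
          simp only [Complex.zero_re, Complex.zero_im, Complex.mul_re, Complex.mul_im] at q1 q2 c1 c2
          rw [← q2, mul_zero, sub_zero] at c1
          rw [← q2, mul_zero, zero_add] at c2
          refine Complex.le_def.mpr ⟨?_, ?_⟩
          · exact nonneg_of_mul_nonneg_left c1 q1
          · have := (mul_eq_zero.mp c2.symm).resolve_right q1.ne'
            simpa using this.symm
      obtain ⟨B, hB⟩ : ∃ B : Matrix (Fin n × Fin (m i)) (Fin n × Fin (m i)) ℂ,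
          G = B.conjTranspose * B := by
        open scoped MatrixOrder Matrix.Norms.L2Operator in
        exact CStarAlgebra.nonneg_iff_eq_star_mul_self.mp hG.nonneg
      refine ⟨Matrix.of fun r s => Matrix.of fun a b => B (r, a) (s, b), ?_⟩
      ext r s a b
      have := congrFun (congrFun hB (r, a)) (s, b)
      simp only [G, Matrix.of_apply] at this
      rw [Matrix.map_apply, this]
      simp [Matrix.mul_apply, Fintype.sum_prod_type, Matrix.sum_apply,
        Matrix.star_eq_conjTranspose]
    choose N hN using key
    refine ⟨Matrix.of fun r s i => N i r s, ?_⟩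
    ext1 r s
    funext i
    have := congrFun (congrFun (hN i) r) s
    rw [Matrix.map_apply] at this
    rw [Matrix.map_apply, this]
    simp [Matrix.mul_apply, Finset.sum_apply]
  · rintro n M ⟨N, rfl⟩
    have := hpos1 n n (N.map (fun x => Φ (γ.symm x)))
    convert this using 1
    ext1 r s
    simp only [Matrix.map_apply, Matrix.mul_apply, Matrix.conjTranspose_apply, map_sum]
    congr 1
    refine Finset.sum_congr rfl fun t _ => ?_
    rw [← hΦs', ← ho]
    apply γ.injective
    rw [gmul, gst]
    simp
end

section
open scoped Matrix.Norms.L2Operator MatrixOrder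

section cstar
variable {A : Type*} [CStarAlgebra A] [PartialOrder A] [StarOrderedRing A]

theorem nonneg_iff_aux (a : A) : 0 ≤ a ↔ ∃ b : A, a = star b * b :=
  CStarAlgebra.nonneg_iff_eq_star_mul_self

theorem matPos_iff {n : ℕ} (M : Matrix (Fin n) (Fin n) A) :
    MatPos M ↔ 0 ≤ CStarMatrix.ofMatrix M := by
  exact (nonneg_iff_aux (A := CStarMatrix (Fin n) (Fin n) A) _).symm

theorem MatPos.lim {n : ℕ} {ι : Type*} {U : Filter ι} [U.NeBot]
    (F : ι → Matrix (Fin n) (Fin n) A) (M : Matrix (Fin n) (Fin n) A)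
    (hF : ∀ l, MatPos (F l))
    (h : ∀ r s, Filter.Tendsto (fun l => F l r s) U (nhds (M r s))) : MatPos M := by
  rw [matPos_iff]
  have h1 : Filter.Tendsto (fun l => CStarMatrix.ofMatrix (F l)) U
      (nhds (CStarMatrix.ofMatrix M)) := by
    have h2 : Filter.Tendsto F U (nhds M) :=
      tendsto_pi_nhds.mpr fun r => tendsto_pi_nhds.mpr fun s => h r s
    exact (CStarMatrix.ofMatrixL.continuous.tendsto M).comp h2
  exact ge_of_tendsto' h1 fun l => (matPos_iff _).mp (hF l)

theorem MatPos.rect {n p : ℕ} (Z : Matrix (Fin n) (Fin p) A) : MatPos (Z.conjTranspose * Z) := by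
  rcases Nat.eq_zero_or_pos p with rfl | hp
  · exact ⟨0, by ext i; exact i.elim0⟩
  have e : Z.conjTranspose * Z = ∑ k, Matrix.of fun i j => star (Z k i) * Z k j := by
    ext i j
    simp [Matrix.mul_apply, Matrix.sum_apply]
  rw [e, matPos_iff]
  have e2 : CStarMatrix.ofMatrix (∑ k, Matrix.of fun i j => star (Z k i) * Z k j)
    = ∑ k, CStarMatrix.ofMatrix (Matrix.of fun i j => star (Z k i) * Z k j) :=
    map_sum CStarMatrix.ofMatrixL _ _
  rw [e2]
  refine Finset.sum_nonneg fun k _ => ?_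
  rw [← matPos_iff]
  refine ⟨Matrix.of fun i j => if i = ⟨0, hp⟩ then Z k j else 0, ?_⟩
  ext i j
  simp [Matrix.mul_apply]

theorem mp2 (c : ℝ) (hc : 0 ≤ c) (x y : A)
    (h : MatPos !![(c : ℂ) • (1 : A), x; y, (c : ℂ) • (1 : A)]) : y = star x ∧ ‖x‖ ≤ 2 * c := by
  obtain ⟨N, hN⟩ := h
  have h00 := congrFun (congrFun hN 0) 0
  have h01 := congrFun (congrFun hN 0) 1
  have h10 := congrFun (congrFun hN 1) 0
  have h11 := congrFun (congrFun hN 1) 1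
  simp only [Matrix.mul_apply, Fin.sum_univ_two, Matrix.conjTranspose_apply, Matrix.of_apply,
    Matrix.cons_val', Matrix.cons_val_zero, Matrix.cons_val_one, Matrix.cons_val_fin_one] at h00 h01 h10 h11
  have hone : ‖(c : ℂ) • (1 : A)‖ ≤ c := by
    rw [norm_smul]
    rcases subsingleton_or_nontrivial A with hA | hA
    · rw [Subsingleton.elim (1 : A) 0]; simpa using hc
    · simp [abs_of_nonneg hc]
  have hb : ∀ a b : A, (c : ℂ) • (1 : A) = star a * a + star b * b →
      ‖a‖ ^ 2 ≤ c ∧ ‖b‖ ^ 2 ≤ c := by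
    intro a b hab
    constructor
    · rw [pow_two, ← CStarRing.norm_star_mul_self]
      refine le_trans (CStarAlgebra.norm_le_norm_of_nonneg_of_le (star_mul_self_nonneg a) ?_) hone
      rw [hab]; exact le_add_of_nonneg_right (star_mul_self_nonneg b)
    · rw [pow_two, ← CStarRing.norm_star_mul_self]
      refine le_trans (CStarAlgebra.norm_le_norm_of_nonneg_of_le (star_mul_self_nonneg b) ?_) hone
      rw [hab]; exact le_add_of_nonneg_left (star_mul_self_nonneg a)
  refine ⟨by rw [h10, h01]; simp, ?_⟩
  obtain ⟨a1, a2⟩ := hb _ _ h00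
  obtain ⟨b1, b2⟩ := hb _ _ h11
  rw [h01]
  calc _ ≤ ‖star (N 0 0) * N 0 1‖ + ‖star (N 1 0) * N 1 1‖ := norm_add_le _ _
    _ ≤ ‖N 0 0‖ * ‖N 0 1‖ + ‖N 1 0‖ * ‖N 1 1‖ := by
      gcongr
      · simpa using norm_mul_le (star (N 0 0)) (N 0 1)
      · simpa using norm_mul_le (star (N 1 0)) (N 1 1)
    _ ≤ 2 * c := by nlinarith [sq_nonneg (‖N 0 0‖ - ‖N 0 1‖), sq_nonneg (‖N 1 0‖ - ‖N 1 1‖)]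

theorem mp2' (c : ℝ) (hc : 0 < c) (x : A) (hx : ‖x‖ ≤ c) :
    MatPos !![(c : ℂ) • (1 : A), x; star x, (c : ℂ) • (1 : A)] := by
  have h1 : star x * x ≤ algebraMap ℝ A (c ^ 2) := by
    refine le_trans CStarAlgebra.star_mul_le_algebraMap_norm_sq ?_
    apply algebraMap_mono
    gcongr
  have h2 : 0 ≤ c⁻¹ • (algebraMap ℝ A (c ^ 2) - star x * x) :=
    smul_nonneg (by positivity) (sub_nonneg.mpr h1)
  obtain ⟨w, hw⟩ := CStarAlgebra.nonneg_iff_eq_star_mul_self.mp h2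
  refine ⟨!![(√c) • (1 : A), (√c)⁻¹ • x; 0, w], ?_⟩
  have hs : √c * √c = c := Real.mul_self_sqrt hc.le
  have hs0 : √c ≠ 0 := (Real.sqrt_pos.mpr hc).ne'
  have hc0 : c ≠ 0 := hc.ne'
  have e1 : c⁻¹ * c ^ 2 = c := by field_simp
  rw [Algebra.algebraMap_eq_smul_one, smul_sub, smul_smul, e1] at hw
  ext i j
  fin_cases i <;> fin_cases j
  · simp [Matrix.mul_apply, Fin.sum_univ_two, smul_smul, hs]
  · simp [Matrix.mul_apply, Fin.sum_univ_two, smul_smul, hs0]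
  · simp [Matrix.mul_apply, Fin.sum_univ_two, smul_smul, hs0]
  · simp [Matrix.mul_apply, Fin.sum_univ_two, smul_smul, ← hw]
    rw [← mul_inv, hs]
    abel
end cstar

/-- bounded families of matrices -/
def bddFam {ι : Type*} (d : ι → ℕ) :
    StarSubalgebra ℂ ((l : ι) → Matrix (Fin (d l)) (Fin (d l)) ℂ) where
  carrier := {f | ∃ C : ℝ, ∀ l, ‖f l‖ ≤ C}
  mul_mem' := by
    rintro f g ⟨C, hC⟩ ⟨D, hD⟩
    refine ⟨C * D, fun l => ?_⟩
    exact (norm_mul_le _ _).trans (mul_le_mul (hC l) (hD l) (norm_nonneg _)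
      ((norm_nonneg _).trans (hC l)))
  add_mem' := by
    rintro f g ⟨C, hC⟩ ⟨D, hD⟩
    exact ⟨C + D, fun l => (norm_add_le _ _).trans (add_le_add (hC l) (hD l))⟩
  algebraMap_mem' := by
    intro r
    refine ⟨‖r‖, fun l => ?_⟩
    rw [Pi.algebraMap_apply, Algebra.algebraMap_eq_smul_one, norm_smul]
    rcases subsingleton_or_nontrivial (Matrix (Fin (d l)) (Fin (d l)) ℂ) with hA | hA
    · rw [Subsingleton.elim (1 : Matrix (Fin (d l)) (Fin (d l)) ℂ) 0]; simp
    · simp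
  star_mem' := by
    rintro f ⟨C, hC⟩
    exact ⟨C, fun l => by rw [Pi.star_apply, norm_star]; exact hC l⟩

theorem aux_main {H' : Type*} [NormedAddCommGroup H'] [InnerProductSpace ℂ H']
    [CompleteSpace H'] (S : Submodule ℂ (H' →L[ℂ] H'))
    (hone : (1 : H' →L[ℂ] H') ∈ S) (hstar : ∀ X ∈ S, star X ∈ S)
    [FiniteDimensional ℂ ↥S]
    {ι : Type*} (U : Ultrafilter ι) (d : ι → ℕ)
    (φ : ∀ l : ι, ↥S →ₗ[ℂ] Matrix (Fin (d l)) (Fin (d l)) ℂ)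
    (ψ : ∀ l : ι, Matrix (Fin (d l)) (Fin (d l)) ℂ →ₗ[ℂ] ↥S)
    (hφ1 : ∀ l, φ l ⟨1, hone⟩ = 1) (hφcp : ∀ l, IsCPsub S (φ l))
    (hψ1 : ∀ l, ψ l 1 = ⟨1, hone⟩)
    (hψcp : ∀ l, IsCPfun (fun Y : Matrix (Fin (d l)) (Fin (d l)) ℂ =>
      ((ψ l Y : ↥S) : H' →L[ℂ] H')))
    (happrox : ∀ X : ↥S, Filter.Tendsto (fun l => ψ l (φ l X)) U (nhds X)) :
    ∃ (k : ℕ) (m : Fin k → ℕ)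
      (γ : ↥S ≃ₗ[ℂ] ((i : Fin k) → Matrix (Fin (m i)) (Fin (m i)) ℂ)),
      γ ⟨1, hone⟩ = 1 ∧ IsCPsub S γ ∧
      ∀ (mm : ℕ) (M : Matrix (Fin mm) (Fin mm) ((i : Fin k) → Matrix (Fin (m i)) (Fin (m i)) ℂ)),
        MatPos M → MatPos ((M.map γ.symm).map (fun x => (x : H' →L[ℂ] H'))) := by
  have hφ : ∀ (l : ι) (X : ↥S), φ l ⟨star (X : H' →L[ℂ] H'), hstar X X.2⟩ = star (φ l X) ∧
      ‖φ l X‖ ≤ 2 * (‖X‖ + 1) := by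
    intro l X
    apply mp2 (‖X‖ + 1) (by positivity)
    have h1 := mp2' (‖X‖ + 1) (by positivity) (X : H' →L[ℂ] H') (by simp)
    have h2 := hφcp l 2 !![((‖X‖ + 1 : ℝ) : ℂ) • (⟨1, hone⟩ : ↥S), X;
      ⟨star (X : H' →L[ℂ] H'), hstar X X.2⟩, ((‖X‖ + 1 : ℝ) : ℂ) • (⟨1, hone⟩ : ↥S)] (by
        refine Eq.mp (congrArg MatPos ?_) h1
        ext1 i j
        fin_cases i <;> fin_cases j <;> rfl)
    refine Eq.mp (congrArg MatPos ?_) h2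
    ext1 i j
    have h3 : φ l (((‖X‖ + 1 : ℝ) : ℂ) • (⟨1, hone⟩ : ↥S)) = ((‖X‖ + 1 : ℝ) : ℂ) • 1 := by
      rw [map_smul, hφ1]
    fin_cases i <;> fin_cases j
    · exact h3
    · rfl
    · rfl
    · exact h3
  have hψ : ∀ (l : ι) (Y : Matrix (Fin (d l)) (Fin (d l)) ℂ),
      (ψ l (star Y) : H' →L[ℂ] H') = star (ψ l Y : H' →L[ℂ] H') ∧
      ‖(ψ l Y : H' →L[ℂ] H')‖ ≤ 2 * (‖Y‖ + 1) := by
    intro l Y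
    apply mp2 (‖Y‖ + 1) (by positivity)
    have h1 := mp2' (‖Y‖ + 1) (by positivity) Y (by simp)
    have h2 := hψcp l 2 _ h1
    refine Eq.mp (congrArg MatPos ?_) h2
    ext1 i j
    fin_cases i <;> fin_cases j <;> simp [hψ1]
  have : ProperSpace ↥S := FiniteDimensional.proper ℂ ↥S
  have hlim : ∀ a : bddFam d, ∃ x : ↥S,
      Filter.Tendsto (fun l => ψ l ((a : (l : ι) → Matrix (Fin (d l)) (Fin (d l)) ℂ) l)) U (nhds x) := by
    rintro ⟨a, C, hC⟩
    have hcpt : IsCompact (Metric.closedBall (0 : ↥S) (2 * (C + 1))) := isCompact_closedBall _ _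
    obtain ⟨x, -, hx⟩ := hcpt.ultrafilter_le_nhds (U.map (fun l => ψ l (a l))) (by
      rw [Filter.le_principal_iff]
      refine Filter.mem_map.mpr (Filter.univ_mem' fun l => ?_)
      simp only [Set.mem_preimage, mem_closedBall_zero_iff]
      have h1 := (hψ l (a l)).2
      have h2 := hC l
      rw [Submodule.norm_coe] at h1
      linarith)
    exact ⟨x, hx⟩
  choose Ψ0 hΨ0 using hlim
  let Φ : ↥S →ₗ[ℂ] bddFam d :=
    { toFun := fun x => ⟨fun l => φ l x, 2 * (‖x‖ + 1), fun l => (hφ l x).2⟩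
      map_add' := fun x y => by
        apply Subtype.ext; funext l; exact map_add _ _ _
      map_smul' := fun c x => by
        apply Subtype.ext; funext l; exact map_smul _ _ _ }
  let Ψ : bddFam d →ₗ[ℂ] ↥S :=
    { toFun := Ψ0
      map_add' := fun a b => by
        refine tendsto_nhds_unique (hΨ0 (a + b)) ?_
        convert (hΨ0 a).add (hΨ0 b) using 2 with l
        exact map_add (ψ l) _ _
      map_smul' := fun c a => by
        refine tendsto_nhds_unique (hΨ0 (c • a)) ?_
        change Filter.Tendsto _ _ (nhds (c • Ψ0 a))
        convert (hΨ0 a).const_smul c using 2 with l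
        exact map_smul (ψ l) _ _ }
  have hco : ∀ a : bddFam d, Filter.Tendsto
      (fun l => (ψ l ((a : (l : ι) → Matrix (Fin (d l)) (Fin (d l)) ℂ) l) : H' →L[ℂ] H')) U
      (nhds (Ψ a : H' →L[ℂ] H')) := fun a =>
    (continuous_subtype_val.tendsto _).comp (hΨ0 a)
  refine aux_abs S hone hstar Φ Ψ ?_ ?_ ?_ ?_ ?_
  · intro x
    exact tendsto_nhds_unique (hΨ0 (Φ x)) (happrox x)
  · apply Subtype.ext; funext l; exact hφ1 l
  · intro x
    apply Subtype.ext; funext l; exact (hφ l x).1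
  · intro a
    refine tendsto_nhds_unique (hco (star a)) ?_
    convert (hco a).star using 2 with l
    exact (hψ l _).1
  · intro n p M hM Y
    refine MatPos.lim (U := (U : Filter ι)) (fun l =>
      (((Y.conjTranspose * M.map Φ * Y).map
        (fun a : bddFam d => (a : (l : ι) → Matrix (Fin (d l)) (Fin (d l)) ℂ) l)).map
        (fun B => (ψ l B : H' →L[ℂ] H')))) _ ?_ ?_
    · intro l
      apply hψcp
      obtain ⟨N, hN⟩ := hφcp l n M hM
      let ev : bddFam d →+* Matrix (Fin (d l)) (Fin (d l)) ℂ :=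
        (Pi.evalRingHom (fun l => Matrix (Fin (d l)) (Fin (d l)) ℂ) l).comp
          (bddFam d).subtype.toRingHom
      have e : (Y.conjTranspose * M.map Φ * Y).map
        (fun a : bddFam d => (a : (l : ι) → Matrix (Fin (d l)) (Fin (d l)) ℂ) l)
        = (N * Y.map ev).conjTranspose * (N * Y.map ev) := by
        have e1 : (Y.conjTranspose * M.map Φ * Y).map ev
            = (Y.map ev).conjTranspose * M.map (φ l) * Y.map ev := by
          rw [Matrix.map_mul, Matrix.map_mul]
          rfl
        change (Y.conjTranspose * M.map Φ * Y).map ev = _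
        rw [e1, hN, Matrix.conjTranspose_mul]
        simp only [Matrix.mul_assoc]
      rw [e]
      exact MatPos.rect _
    · intro r s
      exact hco _
end

end Aux

/-- a finite-dimensional concrete operator system `S ⊆ B(H)` admitting nets
of unital completely positive maps `φ_l : S → M_{d l}(ℂ)`, `ψ_l : M_{d l}(ℂ) → S` with
`ψ_l ∘ φ_l → id_S` in the point-norm topology is unitally completely order isomorphic to
a finite direct sum of matrix algebras. -/
theorem stmt_14 {H' : Type*} [NormedAddCommGroup H'] [InnerProductSpace ℂ H']
    [CompleteSpace H'] (S : Submodule ℂ (H' →L[ℂ] H'))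
    (hone : (1 : H' →L[ℂ] H') ∈ S) (hstar : ∀ X ∈ S, star X ∈ S)
    [FiniteDimensional ℂ ↥S]
    {ι : Type*} [Nonempty ι] [Preorder ι] [IsDirected ι (· ≤ ·)] (d : ι → ℕ)
    (φ : ∀ l : ι, ↥S →ₗ[ℂ] Matrix (Fin (d l)) (Fin (d l)) ℂ)
    (ψ : ∀ l : ι, Matrix (Fin (d l)) (Fin (d l)) ℂ →ₗ[ℂ] ↥S)
    (hφ1 : ∀ l, φ l ⟨1, hone⟩ = 1) (hφcp : ∀ l, IsCPsub S (φ l))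
    (hψ1 : ∀ l, ψ l 1 = ⟨1, hone⟩)
    (hψcp : ∀ l, IsCPfun (fun Y : Matrix (Fin (d l)) (Fin (d l)) ℂ =>
      ((ψ l Y : ↥S) : H' →L[ℂ] H')))
    (happrox : ∀ X : ↥S,
      Filter.Tendsto
        (fun l => ‖(X : H' →L[ℂ] H') - ((ψ l (φ l X) : ↥S) : H' →L[ℂ] H')‖)
        Filter.atTop (nhds 0)) :
    ∃ (k : ℕ) (m : Fin k → ℕ)
      (γ : ↥S ≃ₗ[ℂ] ((i : Fin k) → Matrix (Fin (m i)) (Fin (m i)) ℂ)),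
      γ ⟨1, hone⟩ = 1 ∧ IsCPsub S γ ∧
      ∀ (mm : ℕ) (M : Matrix (Fin mm) (Fin mm) ((i : Fin k) → Matrix (Fin (m i)) (Fin (m i)) ℂ)),
        MatPos M → MatPos ((M.map γ.symm).map (fun x => (x : H' →L[ℂ] H'))) := by
  have hne : (Filter.atTop : Filter ι).NeBot := Filter.atTop_neBot
  refine aux_main S hone hstar (Ultrafilter.of (Filter.atTop : Filter ι)) d φ ψ hφ1 hφcp hψ1 hψcp ?_
  intro X
  refine Filter.Tendsto.mono_left ?_ (Ultrafilter.of_le _)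
  rw [tendsto_iff_norm_sub_tendsto_zero]
  refine (happrox X).congr fun l => ?_
  rw [norm_sub_rev]
  rfl
end
end
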